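/- arXiv:1907.01373 — 2 statements merged into one kernel-verified Lean document; each statement's English description precedes it below -/
import Mathlib

section
/- Let 0<s<1 and 1≤p<∞ satisfy sp ≥ 1, and let m ≥ 1. Let (Ñ, d_Ñ) and (N, d_N) be metric spaces and let π : Ñ → N be a topological covering map which is nonexpansive (d_N(π(a),π(b)) ≤ d_Ñ(a,b) for all a,b) and a local isometry in the sense that every point a ∈ Ñ has ε(a) > 0 such that d_N(π(x),π(y)) = d_Ñ(x,y) for all x,y in the open ball B(a, ε(a)) ⊆ Ñ. Let Ω ⊆ ℝ^m be a connected open set, let ũ : Ω → Ñ be continuous and in W^{s,p}_loc(Ω, Ñ), and let ṽ : Ω → Ñ be Borel measurable and in W^{s,p}_loc(Ω, Ñ), with π ∘ ũ = π ∘ ṽ almost everywhere on Ω. Then either ũ = ṽ almost everywhere on Ω, or ũ(x) ≠ ṽ(x) for almost every x ∈ Ω. -/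
open MeasureTheory Set ENNReal Metric

/-- The Gagliardo `W^{s,p}` double integral of a map `w : ℝ^m → X` on a set `A`. -/
noncomputable def gagliardoIntegral {m : ℕ} {X : Type*} [PseudoEMetricSpace X] (s p : ℝ)
    (A : Set (EuclideanSpace ℝ (Fin m))) (w : EuclideanSpace ℝ (Fin m) → X) : ℝ≥0∞ :=
  ∫⁻ x in A, ∫⁻ y in A, edist (w x) (w y) ^ p / edist x y ^ ((m : ℝ) + s * p)

/-- `w ∈ W^{s,p}_loc(Ω, X)`: every point of `Ω` has an open neighborhood in `Ω` on which the
Gagliardo double integral is finite. -/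
def MemWsplocOn {m : ℕ} {X : Type*} [PseudoEMetricSpace X] (s p : ℝ)
    (Ω : Set (EuclideanSpace ℝ (Fin m))) (w : EuclideanSpace ℝ (Fin m) → X) : Prop :=
  ∀ x ∈ Ω, ∃ U : Set (EuclideanSpace ℝ (Fin m)),
    IsOpen U ∧ x ∈ U ∧ U ⊆ Ω ∧ gagliardoIntegral s p U w < ∞

/-!
Since `π` is locally injective and `ũ` is continuous, near each point of `Ω` either `ṽ = ũ`, and
then `ṽ` is close to `ũ`, or `ṽ` stays at a definite distance from `ũ`. So the local question is
whether a `W^{s,p}` map can take its values in two separated sets, on subsets `A` and `C` of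
positive measure of a ball. If it did, the numerator of its Gagliardo integrand would be bounded
below on `A × C`, so `∬_{A × C} |x - y|^{-t}` with `t = m + sp ≥ m + 1` would be finite. The
midpoint of `x ∈ A` and `y ∈ C` belongs to `A` or to `C` and makes with `y` or with `x` a pair in
`A × C` at half the distance; changing variables, the part of the integral over the pairs closer
than `R` is at most `2^{m+1-t} ≤ 1` times the part over the pairs closer than `R/2`. Iterating, it
is bounded by the integral over pairs at vanishing distance, hence is zero. Connectedness of `Ω`
makes the local alternative global.
-/

open Module Topology

section ClosePairs

variable {α : Type*} [PseudoEMetricSpace α]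

/-- The pairs in `A ×ˢ C` at distance less than `R`: the region to which the singular double
integral of `|x - y|^{-t}` over `A ×ˢ C` is truncated. -/
def closePairs (A C : Set α) (R : ℝ≥0∞) : Set (α × α) :=
  A ×ˢ C ∩ {z | edist z.1 z.2 < R}

lemma closePairs_mono (A C : Set α) {R R' : ℝ≥0∞} (h : R ≤ R') :
    closePairs A C R ⊆ closePairs A C R' :=
  inter_subset_inter_right _ fun _ hz => lt_of_lt_of_le hz h

lemma measurableSet_closePairs [MeasurableSpace α] [OpensMeasurableSpace α]
    [SecondCountableTopology α] {A C : Set α} (hA : MeasurableSet A) (hC : MeasurableSet C)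
    (R : ℝ≥0∞) : MeasurableSet (closePairs A C R) :=
  (hA.prod hC).inter (measurableSet_lt measurable_edist measurable_const)

end ClosePairs

lemma iInter_closePairs_eq_empty {α : Type*} [EMetricSpace α] {A C : Set α} (hAC : Disjoint A C)
    {ι : Type*} {l : Filter ι} [l.NeBot] {R : ι → ℝ≥0∞} (hR : Filter.Tendsto R l (𝓝 0)) :
    ⋂ i, closePairs A C (R i) = ∅ := by
  refine eq_empty_of_forall_notMem fun z hz => ?_
  have hz' : ∀ i, z ∈ closePairs A C (R i) := mem_iInter.1 hz
  obtain ⟨i⟩ : Nonempty ι := l.nonempty_of_neBot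
  have hdist : edist z.1 z.2 = 0 :=
    nonpos_iff_eq_zero.1 (ge_of_tendsto' hR fun j => (hz' j).2.le)
  exact hAC.ne_of_mem (hz' i).1.1 (hz' i).1.2 (edist_eq_zero.1 hdist)

section Midpoint

variable {E : Type*} [NormedAddCommGroup E] [NormedSpace ℝ E]

lemma edist_left_midpoint (x y : E) : edist x (midpoint ℝ x y) = 2⁻¹ * edist x y := by
  rw [edist_nndist, edist_nndist, nndist_left_midpoint]
  simp

lemma edist_midpoint_right (x y : E) : edist (midpoint ℝ x y) y = 2⁻¹ * edist x y := by
  rw [midpoint_comm, edist_comm, edist_left_midpoint, edist_comm]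

lemma closePairs_subset_preimage_midpoint {A C : Set E} (hconv : Convex ℝ (A ∪ C)) (R : ℝ≥0∞) :
    closePairs A C R ⊆
      (fun z : E × E => (z.1, midpoint ℝ z.1 z.2)) ⁻¹' closePairs A C (2⁻¹ * R) ∪
      (fun z : E × E => (midpoint ℝ z.1 z.2, z.2)) ⁻¹' closePairs A C (2⁻¹ * R) := by
  rintro ⟨x, y⟩ ⟨⟨hx, hy⟩, hR⟩
  have hhalf : 2⁻¹ * edist x y < 2⁻¹ * R :=
    ENNReal.mul_lt_mul_right (by simp) (by simp) hR
  rcases hconv.midpoint_mem (Or.inl hx) (Or.inr hy) with hmid | hmid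
  · exact Or.inr ⟨⟨hmid, hy⟩, (edist_midpoint_right x y).trans_lt hhalf⟩
  · exact Or.inl ⟨⟨hx, hmid⟩, (edist_left_midpoint x y).trans_lt hhalf⟩

variable [FiniteDimensional ℝ E] [MeasurableSpace E] [BorelSpace E]

lemma measurable_midpoint : Measurable fun z : E × E => midpoint ℝ z.1 z.2 := by
  simp_rw [midpoint_eq_smul_add]
  fun_prop

variable (μ : Measure E) [μ.IsAddHaarMeasure]

lemma map_midpoint_addHaar (x : E) :
    μ.map (fun y => midpoint ℝ x y) = (2 : ℝ≥0∞) ^ finrank ℝ E • μ := by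
  have hcomp : (fun y => midpoint ℝ x y) = ((2⁻¹ : ℝ) • x + ·) ∘ ((2⁻¹ : ℝ) • · : E → E) := by
    ext y
    simp [midpoint_eq_smul_add]
  rw [hcomp, ← Measure.map_map (by fun_prop) (by fun_prop),
    Measure.map_addHaar_smul μ (by norm_num), Measure.map_smul, map_add_left_eq_self]
  simp

lemma measurePreserving_prodMk_midpoint_left :
    MeasurePreserving (fun z : E × E => (z.1, midpoint ℝ z.1 z.2)) (μ.prod μ)
      ((2 : ℝ≥0∞) ^ finrank ℝ E • μ.prod μ) := by
  rw [← Measure.prod_smul_right]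
  exact (MeasurePreserving.id μ).skew_product measurable_midpoint
    (Filter.Eventually.of_forall (map_midpoint_addHaar μ))

lemma measurePreserving_prodMk_midpoint_right :
    MeasurePreserving (fun z : E × E => (midpoint ℝ z.1 z.2, z.2)) (μ.prod μ)
      ((2 : ℝ≥0∞) ^ finrank ℝ E • μ.prod μ) := by
  have hswap : MeasurePreserving Prod.swap (μ.prod μ) (μ.prod μ) := Measure.measurePreserving_swap
  convert (hswap.smul_measure _).comp
    ((measurePreserving_prodMk_midpoint_left μ).comp hswap) using 1
  ext z : 1
  simp [midpoint_comm]

end Midpoint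

lemma setLIntegral_preimage_of_edist_eq_half {α : Type*} [PseudoEMetricSpace α]
    [MeasurableSpace α] [OpensMeasurableSpace α] [SecondCountableTopology α]
    {ν : Measure (α × α)} {c : ℝ≥0∞} {φ : α × α → α × α} (hφ : MeasurePreserving φ ν (c • ν))
    (hhalf : ∀ z, edist (φ z).1 (φ z).2 = 2⁻¹ * edist z.1 z.2) (t : ℝ) {S : Set (α × α)}
    (hS : MeasurableSet S) :
    ∫⁻ z in φ ⁻¹' S, edist z.1 z.2 ^ (-t) ∂ν =
      2 ^ (-t) * (c * ∫⁻ z in S, edist z.1 z.2 ^ (-t) ∂ν) := by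
  have hscale (z : α × α) :
      edist z.1 z.2 ^ (-t) = 2 ^ (-t) * edist (φ z).1 (φ z).2 ^ (-t) := by
    rw [hhalf, ENNReal.mul_rpow_eq_ite, if_neg (by simp), ← mul_assoc,
      ← ENNReal.mul_rpow_of_ne_top (by simp) (by simp), ENNReal.mul_inv_cancel (by simp) (by simp),
      ENNReal.one_rpow, one_mul]
  calc ∫⁻ z in φ ⁻¹' S, edist z.1 z.2 ^ (-t) ∂ν
      = 2 ^ (-t) * ∫⁻ z in φ ⁻¹' S, edist (φ z).1 (φ z).2 ^ (-t) ∂ν := by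
        rw [← lintegral_const_mul' _ _ (by simp)]
        simp_rw [← hscale]
    _ = 2 ^ (-t) * (c * ∫⁻ z in S, edist z.1 z.2 ^ (-t) ∂ν) := by
        rw [hφ.setLIntegral_comp_preimage hS (f := fun z => edist z.1 z.2 ^ (-t)) (by fun_prop),
          Measure.restrict_smul, lintegral_smul_measure, smul_eq_mul]

lemma rpow_mul_setLIntegral_prod_le {α X : Type*} [PseudoEMetricSpace α] [MeasurableSpace α]
    [OpensMeasurableSpace α] [SecondCountableTopology α] {μ : Measure α} [SFinite μ]
    [PseudoEMetricSpace X] {w : α → X} {A B C : Set α} (hAB : A ⊆ B) (hCB : C ⊆ B) {δ : ℝ≥0∞}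
    (hsep : ∀ᵐ x ∂μ.restrict A, ∀ᵐ y ∂μ.restrict C, δ ≤ edist (w x) (w y)) {p : ℝ} (hp : 0 ≤ p)
    (t : ℝ) :
    δ ^ p * ∫⁻ z in A ×ˢ C, edist z.1 z.2 ^ (-t) ∂μ.prod μ ≤
      ∫⁻ x in B, ∫⁻ y in B, edist (w x) (w y) ^ p / edist x y ^ t ∂μ ∂μ := by
  calc δ ^ p * ∫⁻ z in A ×ˢ C, edist z.1 z.2 ^ (-t) ∂μ.prod μ
      = δ ^ p * ∫⁻ x in A, ∫⁻ y in C, edist x y ^ (-t) ∂μ ∂μ := by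
        rw [setLIntegral_prod _ (by fun_prop)]
    _ ≤ ∫⁻ x in A, ∫⁻ y in C, δ ^ p * edist x y ^ (-t) ∂μ ∂μ :=
        (lintegral_const_mul_le _ _).trans (lintegral_mono fun _ => lintegral_const_mul_le _ _)
    _ ≤ ∫⁻ x in A, ∫⁻ y in C, edist (w x) (w y) ^ p / edist x y ^ t ∂μ ∂μ := by
        refine lintegral_mono_ae (hsep.mono fun x hx => lintegral_mono_ae (hx.mono fun y hxy => ?_))
        rw [ENNReal.rpow_neg, div_eq_mul_inv]
        gcongr
    _ ≤ ∫⁻ x in B, ∫⁻ y in B, edist (w x) (w y) ^ p / edist x y ^ t ∂μ ∂μ :=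
        (lintegral_mono fun _ => lintegral_mono_set hCB).trans (lintegral_mono_set hAB)

lemma areSeparated_eball_compl_eball {X : Type*} [PseudoEMetricSpace X] (a : X) {r R : ℝ≥0∞}
    (hrR : r < R) : Metric.AreSeparated (eball a r) (eball a R)ᶜ := by
  refine ⟨R - r, (tsub_pos_of_lt hrR).ne', fun x hx y hy => tsub_le_iff_right.2 ?_⟩
  calc R ≤ edist y a := not_lt.1 hy
    _ ≤ edist y x + edist x a := edist_triangle _ _ _
    _ ≤ edist x y + r := by
      rw [edist_comm y x]
      gcongr
      exact hx.le

section Interaction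

variable {E : Type*} [NormedAddCommGroup E] [NormedSpace ℝ E] [FiniteDimensional ℝ E]
  [MeasurableSpace E] [BorelSpace E] {μ : Measure E} [μ.IsAddHaarMeasure] {A C : Set E} {t : ℝ}

lemma setLIntegral_closePairs_le_half (hA : MeasurableSet A) (hC : MeasurableSet C)
    (hconv : Convex ℝ (A ∪ C)) (t : ℝ) (R : ℝ≥0∞) :
    ∫⁻ z in closePairs A C R, edist z.1 z.2 ^ (-t) ∂μ.prod μ ≤
      2 ^ ((finrank ℝ E : ℝ) + 1 - t) *
        ∫⁻ z in closePairs A C (2⁻¹ * R), edist z.1 z.2 ^ (-t) ∂μ.prod μ := by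
  have hS : MeasurableSet (closePairs A C (2⁻¹ * R)) := measurableSet_closePairs hA hC _
  refine (lintegral_mono_set (closePairs_subset_preimage_midpoint hconv R)).trans
    ((lintegral_union_le _ _ _).trans_eq ?_)
  rw [setLIntegral_preimage_of_edist_eq_half (measurePreserving_prodMk_midpoint_left μ)
      (fun z => edist_left_midpoint z.1 z.2) t hS,
    setLIntegral_preimage_of_edist_eq_half (measurePreserving_prodMk_midpoint_right μ)
      (fun z => edist_midpoint_right z.1 z.2) t hS,
    sub_eq_neg_add, ENNReal.rpow_add _ _ (by simp) (by simp),
    ENNReal.rpow_add _ _ (by simp) (by simp), ENNReal.rpow_natCast, ENNReal.rpow_one]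
  ring

lemma setLIntegral_closePairs_le_half_pow (hA : MeasurableSet A) (hC : MeasurableSet C)
    (hconv : Convex ℝ (A ∪ C)) (ht : (finrank ℝ E : ℝ) + 1 ≤ t) (R : ℝ≥0∞) (n : ℕ) :
    ∫⁻ z in closePairs A C R, edist z.1 z.2 ^ (-t) ∂μ.prod μ ≤
      ∫⁻ z in closePairs A C (2⁻¹ ^ n * R), edist z.1 z.2 ^ (-t) ∂μ.prod μ := by
  induction n with
  | zero => simp
  | succ n ih =>
    have hconst : (2 : ℝ≥0∞) ^ ((finrank ℝ E : ℝ) + 1 - t) ≤ 1 :=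
      (ENNReal.rpow_le_rpow_of_exponent_le one_le_two (by linarith)).trans_eq ENNReal.rpow_zero
    rw [pow_succ', mul_assoc]
    exact ih.trans ((setLIntegral_closePairs_le_half hA hC hconv t _).trans
      (mul_le_of_le_one_left' hconst))

lemma setLIntegral_closePairs_eq_zero (hA : MeasurableSet A) (hC : MeasurableSet C)
    (hAC : Disjoint A C) (hconv : Convex ℝ (A ∪ C)) (ht : (finrank ℝ E : ℝ) + 1 ≤ t)
    (hfin : ∫⁻ z in A ×ˢ C, edist z.1 z.2 ^ (-t) ∂μ.prod μ ≠ ∞) {R : ℝ≥0∞} (hR : R ≠ ∞) :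
    ∫⁻ z in closePairs A C R, edist z.1 z.2 ^ (-t) ∂μ.prod μ = 0 := by
  let ν : Measure (E × E) := (μ.prod μ).withDensity fun z => edist z.1 z.2 ^ (-t)
  have hν (R : ℝ≥0∞) : ν (closePairs A C R) =
      ∫⁻ z in closePairs A C R, edist z.1 z.2 ^ (-t) ∂μ.prod μ :=
    withDensity_apply _ (measurableSet_closePairs hA hC R)
  have hνfin : ν (closePairs A C (2⁻¹ ^ 0 * R)) ≠ ∞ :=
    hν _ ▸ ne_top_of_le_ne_top hfin (lintegral_mono_set (inter_subset_left))
  have hradius : Filter.Tendsto (fun n : ℕ => 2⁻¹ ^ n * R) Filter.atTop (𝓝 0) := by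
    simpa using ENNReal.Tendsto.mul_const
      (ENNReal.tendsto_pow_atTop_nhds_zero_of_lt_one (r := 2⁻¹) (by simp)) (Or.inr hR)
  have hanti : Antitone fun n : ℕ => closePairs A C (2⁻¹ ^ n * R) := fun k n hkn =>
    closePairs_mono A C (mul_le_mul_left (pow_le_pow_right_of_le_one' (by simp) hkn) R)
  have hlim : Filter.Tendsto (fun n : ℕ => ν (closePairs A C (2⁻¹ ^ n * R))) Filter.atTop
      (𝓝 0) := by
    simpa [iInter_closePairs_eq_empty hAC hradius, Function.comp_def] using
      tendsto_measure_iInter_atTop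
        (fun n => (measurableSet_closePairs hA hC _).nullMeasurableSet) hanti ⟨0, hνfin⟩
  exact nonpos_iff_eq_zero.1 (ge_of_tendsto' hlim fun n =>
    (hν _).symm ▸ setLIntegral_closePairs_le_half_pow hA hC hconv ht R n)

lemma measure_eq_zero_or_measure_eq_zero_of_setLIntegral_prod_ne_top
    (hA : MeasurableSet A) (hC : MeasurableSet C) (hAC : Disjoint A C)
    (hconv : Convex ℝ (A ∪ C)) (ht : (finrank ℝ E : ℝ) + 1 ≤ t)
    (hfin : ∫⁻ z in A ×ˢ C, edist z.1 z.2 ^ (-t) ∂μ.prod μ ≠ ∞) :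
    μ A = 0 ∨ μ C = 0 := by
  have hpos (z : E × E) : edist z.1 z.2 ^ (-t) ≠ 0 := by
    have ht0 : 0 < t := lt_of_lt_of_le (by positivity) ht
    simp [ENNReal.rpow_eq_zero_iff, edist_ne_top, ht0.le]
  have hnull (n : ℕ) : μ.prod μ (closePairs A C n) = 0 := by
    have hzero := setLIntegral_closePairs_eq_zero hA hC hAC hconv ht hfin (natCast_ne_top n)
    rw [lintegral_eq_zero_iff (by fun_prop)] at hzero
    simpa [Filter.EventuallyEq, hpos] using hzero
  have hcover : A ×ˢ C ⊆ ⋃ n : ℕ, closePairs A C n := fun z hz =>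
    mem_iUnion.2 ((ENNReal.exists_nat_gt (edist_ne_top z.1 z.2)).imp fun _ hn => ⟨hz, hn⟩)
  have hprod : μ.prod μ (A ×ˢ C) = 0 :=
    measure_mono_null hcover (measure_iUnion_null hnull)
  rwa [Measure.prod_prod, mul_eq_zero] at hprod

lemma ae_restrict_mem_or_ae_restrict_mem_of_areSeparated {X : Type*} [PseudoEMetricSpace X]
    [MeasurableSpace X] {w : E → X} (hw : Measurable w) {S T : Set X} (hS : MeasurableSet S)
    (hST : Metric.AreSeparated S T) {B : Set E} (hB : MeasurableSet B) (hconv : Convex ℝ B)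
    (hwB : ∀ᵐ x ∂μ.restrict B, w x ∈ S ∪ T) {p : ℝ} (hp : 0 ≤ p)
    (ht : (finrank ℝ E : ℝ) + 1 ≤ t)
    (hfin : ∫⁻ x in B, ∫⁻ y in B, edist (w x) (w y) ^ p / edist x y ^ t ∂μ ∂μ ≠ ∞) :
    (∀ᵐ x ∂μ.restrict B, w x ∈ S) ∨ (∀ᵐ x ∂μ.restrict B, w x ∈ T) := by
  obtain ⟨δ, hδ, hdist⟩ := hST
  have hA : MeasurableSet (B ∩ w ⁻¹' S) := hB.inter (hw hS)
  have hC : MeasurableSet (B \ w ⁻¹' S) := hB.diff (hw hS)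
  have hsep : ∀ᵐ x ∂μ.restrict (B ∩ w ⁻¹' S), ∀ᵐ y ∂μ.restrict (B \ w ⁻¹' S),
      δ ≤ edist (w x) (w y) := by
    filter_upwards [ae_restrict_mem hA] with x hx
    filter_upwards [ae_restrict_mem hC, ae_restrict_of_ae_restrict_of_subset sdiff_subset hwB]
      with y hy hyST
    exact hdist _ hx.2 _ (hyST.resolve_left hy.2)
  have hinteraction : ∫⁻ z in (B ∩ w ⁻¹' S) ×ˢ (B \ w ⁻¹' S),
      edist z.1 z.2 ^ (-t) ∂μ.prod μ ≠ ∞ := by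
    have hδp : δ ^ p ≠ 0 := by simp [ENNReal.rpow_eq_zero_iff, hδ, hp]
    have hle := rpow_mul_setLIntegral_prod_le inter_subset_left sdiff_subset hsep hp t
    exact (ENNReal.lt_top_of_mul_ne_top_right (ne_top_of_le_ne_top hfin hle) hδp).ne
  rcases measure_eq_zero_or_measure_eq_zero_of_setLIntegral_prod_ne_top hA hC
    (disjoint_sdiff_right.mono_left inter_subset_right)
    (by rwa [inter_union_sdiff]) ht hinteraction with hnull | hnull
  · right
    have hnotS : ∀ᵐ x ∂μ.restrict B, w x ∉ S := by
      rw [ae_restrict_iff' hB]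
      exact measure_mono_null (fun x hx => by simpa using hx) hnull
    filter_upwards [hwB, hnotS] with x hxST hxS using hxST.resolve_left hxS
  · left
    rw [ae_restrict_iff' hB]
    exact measure_mono_null (fun x hx => by simpa using hx) hnull

lemma ae_restrict_eq_or_ae_restrict_ne_of_injOn_eball {X Y : Type*} [PseudoEMetricSpace X]
    [MeasurableSpace X] [OpensMeasurableSpace X] {π : X → Y} {a : X} {r R : ℝ≥0∞} (hrR : r < R)
    (hπ : InjOn π (eball a R)) {B : Set E} (hB : MeasurableSet B) (hconv : Convex ℝ B)
    {u v : E → X} (hv : Measurable v) (hu : ∀ᵐ x ∂μ.restrict B, u x ∈ eball a r)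
    (huv : ∀ᵐ x ∂μ.restrict B, π (u x) = π (v x)) {p : ℝ} (hp : 0 ≤ p)
    (ht : (finrank ℝ E : ℝ) + 1 ≤ t)
    (hfin : ∫⁻ x in B, ∫⁻ y in B, edist (v x) (v y) ^ p / edist x y ^ t ∂μ ∂μ ≠ ∞) :
    (∀ᵐ x ∂μ.restrict B, u x = v x) ∨ ∀ᵐ x ∂μ.restrict B, u x ≠ v x := by
  have hsub : eball a r ⊆ eball a R := eball_subset_eball hrR.le
  have heq : ∀ᵐ x ∂μ.restrict B, v x ∈ eball a R → u x = v x := by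
    filter_upwards [hu, huv] with x hux hπx hvx using hπ (hsub hux) hvx hπx
  have hgap : ∀ᵐ x ∂μ.restrict B, v x ∈ eball a r ∪ (eball a R)ᶜ := by
    filter_upwards [hu, heq] with x hux hx
    exact or_iff_not_imp_right.2 fun hvx => hx (not_not.1 hvx) ▸ hux
  rcases ae_restrict_mem_or_ae_restrict_mem_of_areSeparated hv isOpen_eball.measurableSet
    (areSeparated_eball_compl_eball a hrR) hB hconv hgap hp ht hfin with hnear | hfar
  · left
    filter_upwards [heq, hnear] with x hx hvx using hx (hsub hvx)
  · right
    filter_upwards [hu, hfar] with x hux hvx hxeq using hvx (hsub (hxeq ▸ hux))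

end Interaction

section LocalDichotomy

variable {α : Type*} [TopologicalSpace α] [MeasurableSpace α] [OpensMeasurableSpace α]
  {μ : Measure α}

lemma mem_compl_support_restrict_of_ae_restrict {P : α → Prop} {U : Set α} (hU : IsOpen U)
    (hP : ∀ᵐ x ∂μ.restrict U, P x) {x : α} (hx : x ∈ U) :
    x ∈ (μ.restrict {x | ¬P x}).supportᶜ := by
  refine Measure.notMem_support_iff_exists.2 ⟨U, hU.mem_nhds hx, ?_⟩
  rwa [ae_iff, Measure.restrict_apply' hU.measurableSet, inter_comm,
    ← Measure.restrict_apply hU.measurableSet] at hP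

variable [HereditarilyLindelofSpace α]

lemma ae_restrict_compl_support_restrict (P : α → Prop) :
    ∀ᵐ x ∂μ.restrict (μ.restrict {x | ¬P x}).supportᶜ, P x := by
  have hG : MeasurableSet (μ.restrict {x | ¬P x}).supportᶜ :=
    Measure.isOpen_compl_support.measurableSet
  have hnull : μ.restrict {x | ¬P x} (μ.restrict {x | ¬P x}).supportᶜ = 0 :=
    Measure.measure_compl_support
  rwa [ae_iff, Measure.restrict_apply' hG, inter_comm, ← Measure.restrict_apply hG]

lemma ae_restrict_or_ae_restrict_not_of_isPreconnected [μ.IsOpenPosMeasure] {Ω : Set α}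
    (hΩ : IsPreconnected Ω) {P : α → Prop}
    (hloc : ∀ x ∈ Ω, ∃ U, IsOpen U ∧ x ∈ U ∧
      ((∀ᵐ y ∂μ.restrict U, P y) ∨ ∀ᵐ y ∂μ.restrict U, ¬P y)) :
    (∀ᵐ x ∂μ.restrict Ω, P x) ∨ ∀ᵐ x ∂μ.restrict Ω, ¬P x := by
  let G := (μ.restrict {x | ¬P x}).supportᶜ
  let H := (μ.restrict {x | ¬¬P x}).supportᶜ
  have hG : ∀ᵐ x ∂μ.restrict G, P x := ae_restrict_compl_support_restrict P
  have hH : ∀ᵐ x ∂μ.restrict H, ¬P x := ae_restrict_compl_support_restrict fun x => ¬P x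
  have hGo : IsOpen G := Measure.isOpen_compl_support
  have hHo : IsOpen H := Measure.isOpen_compl_support
  have hdisj : Disjoint G H := by
    have hfalse : ∀ᵐ _ ∂μ.restrict (G ∩ H), False := by
      filter_upwards [ae_restrict_of_ae_restrict_of_subset inter_subset_left hG,
        ae_restrict_of_ae_restrict_of_subset inter_subset_right hH] with x hx hx' using hx' hx
    rw [disjoint_iff_inter_eq_empty, ← (hGo.inter hHo).measure_eq_zero_iff μ]
    simpa using hfalse
  have hcover : Ω ⊆ G ∪ H := fun x hx => by
    obtain ⟨U, hU, hxU, hP | hP⟩ := hloc x hx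
    · exact Or.inl (mem_compl_support_restrict_of_ae_restrict hU hP hxU)
    · exact Or.inr (mem_compl_support_restrict_of_ae_restrict hU hP hxU)
  exact (hΩ.subset_or_subset hGo hHo hdisj hcover).imp
    (fun h => ae_restrict_of_ae_restrict_of_subset h hG)
    (fun h => ae_restrict_of_ae_restrict_of_subset h hH)

end LocalDichotomy

section Lifting

variable {m : ℕ} {s p : ℝ} {X : Type*} [PseudoEMetricSpace X]

lemma gagliardoIntegral_mono {A B : Set (EuclideanSpace ℝ (Fin m))} (hAB : A ⊆ B)
    (w : EuclideanSpace ℝ (Fin m) → X) : gagliardoIntegral s p A w ≤ gagliardoIntegral s p B w :=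
  (lintegral_mono fun _ => lintegral_mono_set hAB).trans (lintegral_mono_set hAB)

variable [MeasurableSpace X] [OpensMeasurableSpace X] {Y : Type*} {π : X → Y}
  {Ω : Set (EuclideanSpace ℝ (Fin m))} {u v : EuclideanSpace ℝ (Fin m) → X}

lemma exists_isOpen_ae_restrict_eq_or_ae_restrict_ne (hp : 0 ≤ p) (hsp : 1 ≤ s * p)
    (hπ : IsLocallyInjective π) (hΩ : IsOpen Ω) (hu : ContinuousOn u Ω) (hv : Measurable v)
    (hvloc : MemWsplocOn s p Ω v) (huv : ∀ᵐ x ∂volume.restrict Ω, π (u x) = π (v x))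
    {x₀ : EuclideanSpace ℝ (Fin m)} (hx₀ : x₀ ∈ Ω) :
    ∃ U, IsOpen U ∧ x₀ ∈ U ∧
      ((∀ᵐ x ∂volume.restrict U, u x = v x) ∨ ∀ᵐ x ∂volume.restrict U, u x ≠ v x) := by
  obtain ⟨V, hVo, hx₀V, hinj⟩ := hπ (u x₀)
  obtain ⟨ε, hε, hεV⟩ := EMetric.isOpen_iff.1 hVo _ hx₀V
  obtain ⟨r, hr, hrε⟩ := exists_between hε
  obtain ⟨W, hWo, hx₀W, hWΩ, hWfin⟩ := hvloc x₀ hx₀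
  have hnear : ∀ᶠ x in 𝓝 x₀, u x ∈ eball (u x₀) r ∧ x ∈ W :=
    ((hu.continuousAt (hΩ.mem_nhds hx₀)).eventually_mem (eball_mem_nhds _ hr)).and
      (hWo.mem_nhds hx₀W)
  obtain ⟨ρ, hρ, hball⟩ := Metric.eventually_nhds_iff_ball.1 hnear
  have hBW : ball x₀ ρ ⊆ W := fun x hx => (hball x hx).2
  exact ⟨ball x₀ ρ, isOpen_ball, mem_ball_self hρ,
    ae_restrict_eq_or_ae_restrict_ne_of_injOn_eball hrε (hinj.mono hεV) measurableSet_ball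
      (convex_ball _ _) hv (ae_restrict_of_forall_mem measurableSet_ball fun x hx => (hball x hx).1)
      (ae_restrict_of_ae_restrict_of_subset (hBW.trans hWΩ) huv) hp (by simpa using hsp)
      (ne_top_of_le_ne_top hWfin.ne (gagliardoIntegral_mono hBW v))⟩

end Lifting

theorem lifting_uniqueness_dichotomy_continuous_general {s p : ℝ} {m : ℕ} (hp : 0 ≤ p)
    (hsp : 1 ≤ s * p) {X Y : Type*} [PseudoEMetricSpace X] [MeasurableSpace X]
    [OpensMeasurableSpace X] {π : X → Y} (hπ : IsLocallyInjective π)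
    {Ω : Set (EuclideanSpace ℝ (Fin m))} (hΩo : IsOpen Ω) (hΩc : IsPreconnected Ω)
    {u v : EuclideanSpace ℝ (Fin m) → X} (hu : ContinuousOn u Ω) (hv : Measurable v)
    (hvloc : MemWsplocOn s p Ω v) (huv : ∀ᵐ x ∂volume.restrict Ω, π (u x) = π (v x)) :
    (∀ᵐ x ∂volume.restrict Ω, u x = v x) ∨ ∀ᵐ x ∂volume.restrict Ω, u x ≠ v x :=
  ae_restrict_or_ae_restrict_not_of_isPreconnected hΩc fun _ hx =>
    exists_isOpen_ae_restrict_eq_or_ae_restrict_ne hp hsp hπ hΩo hu hv hvloc huv hx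

/-- **Uniqueness dichotomy with one continuous lifting, for general coverings.** For
`sp ≥ 1`, let `π : Ñ → N` be a covering map between metric spaces which is nonexpansive and
a local isometry. If `Ω ⊆ ℝ^m` is a connected open set, `ũ : Ω → Ñ` is continuous and in
`W^{s,p}_loc(Ω,Ñ)`, and `ṽ ∈ W^{s,p}_loc(Ω,Ñ)` is Borel measurable with `π ∘ ũ = π ∘ ṽ`
a.e. on `Ω`, then either `ũ = ṽ` a.e. on `Ω` or `ũ ≠ ṽ` a.e. on `Ω`. -/
theorem lifting_uniqueness_dichotomy_continuous (s p : ℝ) (m : ℕ) (hs0 : 0 < s)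
    (hs1 : s < 1) (hp1 : 1 ≤ p) (hsp : 1 ≤ s * p) (hm : 1 ≤ m)
    {Ntl N : Type*} [MetricSpace Ntl] [MetricSpace N]
    [MeasurableSpace Ntl] [BorelSpace Ntl]
    (π : Ntl → N) (hcov : IsCoveringMap π)
    (hnonexp : ∀ a b : Ntl, dist (π a) (π b) ≤ dist a b)
    (hlociso : ∀ a : Ntl, ∃ ε > 0, ∀ x ∈ ball a ε, ∀ y ∈ ball a ε,
      dist (π x) (π y) = dist x y)
    (Ω : Set (EuclideanSpace ℝ (Fin m))) (hΩo : IsOpen Ω) (hΩc : IsConnected Ω)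
    (ut vt : EuclideanSpace ℝ (Fin m) → Ntl)
    (hutc : ContinuousOn ut Ω) (hutloc : MemWsplocOn s p Ω ut)
    (hvtm : Measurable vt) (hvtloc : MemWsplocOn s p Ω vt)
    (hπ : ∀ᵐ x ∂(volume.restrict Ω), π (ut x) = π (vt x)) :
    (∀ᵐ x ∂(volume.restrict Ω), ut x = vt x) ∨
      (∀ᵐ x ∂(volume.restrict Ω), ut x ≠ vt x) := by
  exact lifting_uniqueness_dichotomy_continuous_general (zero_le_one.trans hp1) hsp
    hcov.isLocalHomeomorph.isLocallyInjective hΩo hΩc.isPreconnected hutc hvtm hvtloc hπ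
end

section
/- Let m ≥ 2, 0<s<1 and p = 1/s. There is a constant C depending only on m and p with the following property: for every metric space (X,d), every δ ∈ (0,1), and every map u : ℝ^m → X that is (L/δ)-Lipschitz for some L ≥ 0, constant on ℝ^m ∖ U_δ where U_δ := {x ∈ ℝ^m : (1-δ)/2 < |x| < 1/2}, and whose image has diameter at most K < ∞, one has ∫_{ℝ^m}∫_{ℝ^m} d(u(x),u(y))^p/|x-y|^{m+1} dx dy ≤ C (L^p + K^p). In particular the bound is independent of δ. -/
open MeasureTheory Set ENNReal

/-!
Two points at distance `t` have images at distance at most `max L K * min 1 (t / δ)`, so the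
integrand is dominated by a function of `x - y`, the rescaling by `δ` of a fixed radial kernel with
integral `I < ∞`: near the diagonal `s < 1` makes it integrable, far from it `0 < s` does. The
integrand vanishes unless `x` or `y` lies in the annulus, whose measure is of order `δ`. Hence the
double integral is at most `2 μ(U_δ) δ^(-s p) (L ^ p + K ^ p) I = O(δ^(1 - s p)) (L ^ p + K ^ p)`,
and the powers of `δ` cancel exactly when `s p = 1`.
-/

theorem integrableOn_min_one_rpow_mul_rpow {a b : ℝ} (hb : b < -1) (hab : -1 < a + b) :
    IntegrableOn (fun r : ℝ => min 1 r ^ a * r ^ b) (Ioi 0) := by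
  rw [← Ioc_union_Ioi_eq_Ioi zero_le_one]
  refine IntegrableOn.union ?_ ?_
  · have h : IntegrableOn (fun r : ℝ => r ^ (a + b)) (Ioc 0 1) :=
      (intervalIntegrable_iff_integrableOn_Ioc_of_le zero_le_one).1
        (intervalIntegral.intervalIntegrable_rpow' hab)
    refine h.congr_fun (fun r hr => ?_) measurableSet_Ioc
    simp only [min_eq_right hr.2, Real.rpow_add hr.1]
  · refine (integrableOn_Ioi_rpow_of_lt hb one_pos).congr_fun (fun r hr => ?_) measurableSet_Ioi
    simp only [min_eq_left (mem_Ioi.1 hr).le, Real.one_rpow, one_mul]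

section DoubleIntegral

variable {G : Type*} [AddGroup G] [MeasurableSpace G] [MeasurableAdd₂ G] [MeasurableNeg G]
  {μ : Measure G} {f k : G → ℝ≥0∞}

theorem lintegral_lintegral_mul_comp_sub_left [μ.IsAddLeftInvariant] [μ.IsNegInvariant]
    (hf : Measurable f) (hk : Measurable k) :
    ∫⁻ x, ∫⁻ y, f x * k (x - y) ∂μ ∂μ = (∫⁻ x, f x ∂μ) * ∫⁻ z, k z ∂μ := by
  have h_inner (x : G) : ∫⁻ y, f x * k (x - y) ∂μ = f x * ∫⁻ z, k z ∂μ := by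
    rw [lintegral_const_mul _ (by fun_prop), lintegral_sub_left_eq_self]
  simp_rw [h_inner]
  exact lintegral_mul_const _ hf

theorem lintegral_lintegral_mul_comp_sub_right [SFinite μ] [μ.IsAddRightInvariant]
    (hf : Measurable f) (hk : Measurable k) :
    ∫⁻ x, ∫⁻ y, f y * k (x - y) ∂μ ∂μ = (∫⁻ x, f x ∂μ) * ∫⁻ z, k z ∂μ := by
  have h_inner (y : G) : ∫⁻ x, f y * k (x - y) ∂μ = f y * ∫⁻ z, k z ∂μ := by
    rw [lintegral_const_mul _ (by fun_prop), lintegral_sub_right_eq_self]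
  rw [lintegral_lintegral_swap (by fun_prop)]
  simp_rw [h_inner]
  exact lintegral_mul_const _ hf

theorem lintegral_lintegral_le_of_le_comp_sub [SFinite μ] [μ.IsAddLeftInvariant]
    [μ.IsAddRightInvariant] [μ.IsNegInvariant] {F : G → G → ℝ≥0∞} {U : Set G}
    (hk : Measurable k) (hU : MeasurableSet U) (hFk : ∀ x y, F x y ≤ k (x - y))
    (hF : ∀ x ∉ U, ∀ y ∉ U, F x y = 0) :
    ∫⁻ x, ∫⁻ y, F x y ∂μ ∂μ ≤ 2 * μ U * ∫⁻ z, k z ∂μ := by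
  set χ : G → ℝ≥0∞ := U.indicator 1
  have hχ : Measurable χ := measurable_one.indicator hU
  have hF_le (x y : G) : F x y ≤ χ x * k (x - y) + χ y * k (x - y) := by
    by_cases hx : x ∈ U
    · simpa [χ, hx] using (hFk x y).trans le_self_add
    by_cases hy : y ∈ U
    · simpa [χ, hy] using (hFk x y).trans le_add_self
    · simp [hF x hx y hy]
  have h_meas : Measurable fun x => ∫⁻ y, χ x * k (x - y) ∂μ :=
    Measurable.lintegral_prod_right (by fun_prop)
  calc ∫⁻ x, ∫⁻ y, F x y ∂μ ∂μ
      ≤ ∫⁻ x, ∫⁻ y, (χ x * k (x - y) + χ y * k (x - y)) ∂μ ∂μ :=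
        lintegral_mono fun x => lintegral_mono (hF_le x)
    _ = ∫⁻ x, ((∫⁻ y, χ x * k (x - y) ∂μ) + ∫⁻ y, χ y * k (x - y) ∂μ) ∂μ :=
        lintegral_congr fun x => lintegral_add_left (by fun_prop) _
    _ = 2 * μ U * ∫⁻ z, k z ∂μ := by
        rw [lintegral_add_left h_meas, lintegral_lintegral_mul_comp_sub_left hχ hk,
          lintegral_lintegral_mul_comp_sub_right hχ hk, lintegral_indicator_one hU, ← two_mul,
          mul_assoc]

end DoubleIntegral

theorem dist_le_max_mul_min_one {X Y : Type*} [PseudoMetricSpace X] [PseudoMetricSpace Y]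
    {u : Y → X} {δ L K : ℝ} (hδ : 0 < δ) {x y : Y} (hL : dist (u x) (u y) ≤ L / δ * dist x y)
    (hK : dist (u x) (u y) ≤ K) :
    dist (u x) (u y) ≤ max L K * min 1 (dist x y / δ) := by
  have hM : 0 ≤ max L K := dist_nonneg.trans (hK.trans (le_max_right L K))
  rw [mul_min_of_nonneg _ _ hM, mul_one]
  refine le_min (hK.trans (le_max_right L K)) ?_
  calc dist (u x) (u y) ≤ L * (dist x y / δ) := hL.trans_eq (by ring)
    _ ≤ max L K * (dist x y / δ) := by gcongr; exact le_max_left L K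

theorem max_rpow_le_add_rpow {a b : ℝ} (ha : 0 ≤ a) (hb : 0 ≤ b) (p : ℝ) :
    max a b ^ p ≤ a ^ p + b ^ p := by
  rcases max_choice a b with h | h <;> rw [h]
  · exact le_add_of_nonneg_right (by positivity)
  · exact le_add_of_nonneg_left (by positivity)

section FiniteDimensionalSpace

variable {E : Type*} [NormedAddCommGroup E]

/-- The open annulus `r < ‖x‖ < R`. The paper's set `U_δ` is `annulus ((1 - δ) / 2) (1 / 2)`. -/
def annulus (r R : ℝ) : Set E := {x | r < ‖x‖ ∧ ‖x‖ < R}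

theorem annulus_eq_ball_sdiff_closedBall (r R : ℝ) :
    (annulus r R : Set E) = Metric.ball 0 R \ Metric.closedBall 0 r := by
  ext x
  simp [annulus, and_comm]

theorem measurableSet_annulus [MeasurableSpace E] [OpensMeasurableSpace E] (r R : ℝ) :
    MeasurableSet (annulus r R : Set E) := by
  rw [annulus_eq_ball_sdiff_closedBall]
  exact measurableSet_ball.diff measurableSet_closedBall

variable [NormedSpace ℝ E]

/-- The radial kernel `min (1, |z| / δ) ^ p / |z| ^ (dim E + s p)`: up to a constant factor it
dominates, at `z = x - y`, the Gagliardo integrand of a bounded map whose Lipschitz constant is of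
order `1 / δ`. -/
noncomputable def truncatedKernel (s p δ : ℝ) (z : E) : ℝ≥0∞ :=
  ENNReal.ofReal (min 1 (‖z‖ / δ) ^ p / ‖z‖ ^ (Module.finrank ℝ E + s * p))

theorem edist_rpow_div_le_truncatedKernel {X : Type*} [PseudoMetricSpace X] {u : E → X}
    {s p δ M : ℝ} (hp : 0 < p) (hδ : 0 < δ) (hM : 0 ≤ M) {x y : E}
    (h : dist (u x) (u y) ≤ M * min 1 (dist x y / δ)) :
    edist (u x) (u y) ^ p / edist x y ^ (Module.finrank ℝ E + s * p) ≤
      ENNReal.ofReal (M ^ p) * truncatedKernel s p δ (x - y) := by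
  rcases eq_or_ne x y with rfl | hxy
  · simp [ENNReal.zero_rpow_of_pos hp]
  have hd : 0 < dist x y := dist_pos.2 hxy
  rw [edist_dist, edist_dist, ENNReal.ofReal_rpow_of_nonneg dist_nonneg hp.le,
    ENNReal.ofReal_rpow_of_pos hd, ← ENNReal.ofReal_div_of_pos (by positivity), truncatedKernel,
    ← ENNReal.ofReal_mul (by positivity), ← dist_eq_norm, ← mul_div_assoc,
    ← Real.mul_rpow hM (by positivity)]
  gcongr

theorem truncatedKernel_eq_mul_comp_inv_smul {s p δ : ℝ} (hδ : 0 < δ) (z : E) :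
    truncatedKernel s p δ z =
      ENNReal.ofReal (δ ^ (-(Module.finrank ℝ E + s * p))) * truncatedKernel s p 1 (δ⁻¹ • z) := by
  rw [truncatedKernel, truncatedKernel, ← ENNReal.ofReal_mul (by positivity), norm_smul,
    Real.norm_of_nonneg (by positivity), div_one, inv_mul_eq_div,
    Real.div_rpow (norm_nonneg z) hδ.le, Real.rpow_neg hδ.le]
  congr 1
  field_simp

variable [MeasurableSpace E]

/-- The `p`-th power of the Gagliardo seminorm of `W^{s,p}(E, X)`, as an extended nonnegative
number. The diagonal contributes nothing, because `0 / 0 = 0`. -/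
noncomputable def gagliardoEnergy {X : Type*} [PseudoMetricSpace X] (μ : Measure E) (s p : ℝ)
    (u : E → X) : ℝ≥0∞ :=
  ∫⁻ x, ∫⁻ y, edist (u x) (u y) ^ p / edist x y ^ (Module.finrank ℝ E + s * p) ∂μ ∂μ

variable [BorelSpace E]

theorem measurable_truncatedKernel (s p δ : ℝ) :
    Measurable (truncatedKernel s p δ : E → ℝ≥0∞) := by
  unfold truncatedKernel
  fun_prop

variable [FiniteDimensional ℝ E] (μ : Measure E) [μ.IsAddHaarMeasure]

theorem lintegral_comp_smul_addHaar (f : E → ℝ≥0∞) {r : ℝ} (hr : r ≠ 0) :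
    ∫⁻ x, f (r • x) ∂μ = ENNReal.ofReal |(r ^ Module.finrank ℝ E)⁻¹| * ∫⁻ x, f x ∂μ := by
  let e : E ≃ᵐ E := (Homeomorph.smul (Units.mk0 r hr)).toMeasurableEquiv
  calc ∫⁻ x, f (r • x) ∂μ = ∫⁻ x, f x ∂μ.map (r • ·) := (lintegral_map_equiv f e).symm
    _ = _ := by rw [Measure.map_addHaar_smul μ hr, lintegral_smul_measure, smul_eq_mul]

theorem lintegral_truncatedKernel {s p δ : ℝ} (hδ : 0 < δ) :
    ∫⁻ z, truncatedKernel s p δ z ∂μ =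
      ENNReal.ofReal (δ ^ (-(s * p))) * ∫⁻ z, truncatedKernel s p 1 z ∂μ := by
  simp_rw [truncatedKernel_eq_mul_comp_inv_smul hδ]
  rw [lintegral_const_mul' _ _ ENNReal.ofReal_ne_top,
    lintegral_comp_smul_addHaar μ _ (inv_ne_zero hδ.ne'), ← mul_assoc,
    ← ENNReal.ofReal_mul (by positivity), inv_pow, inv_inv, abs_of_pos (by positivity),
    ← Real.rpow_natCast, ← Real.rpow_add hδ]
  ring_nf

theorem gagliardoEnergy_le_of_eqOn_compl {X : Type*} [PseudoMetricSpace X] {u : E → X} {U : Set E}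
    {s p δ L K : ℝ} (hp : 0 < p) (hδ : 0 < δ) (hL : 0 ≤ L) (hU : MeasurableSet U)
    (hLip : ∀ x y, dist (u x) (u y) ≤ L / δ * dist x y)
    (hconst : ∀ x ∉ U, ∀ y ∉ U, u x = u y) (hK : ∀ x y, dist (u x) (u y) ≤ K) :
    gagliardoEnergy μ s p u ≤
      2 * μ U * (ENNReal.ofReal ((L ^ p + K ^ p) * δ ^ (-(s * p))) *
        ∫⁻ z, truncatedKernel s p 1 z ∂μ) := by
  have hK0 : 0 ≤ K := dist_nonneg.trans (hK 0 0)
  have h_integrand (x y : E) :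
      edist (u x) (u y) ^ p / edist x y ^ (Module.finrank ℝ E + s * p) ≤
        ENNReal.ofReal (L ^ p + K ^ p) * truncatedKernel s p δ (x - y) :=
    (edist_rpow_div_le_truncatedKernel hp hδ (hL.trans (le_max_left L K))
      (dist_le_max_mul_min_one hδ (hLip x y) (hK x y))).trans
        (by gcongr; exact max_rpow_le_add_rpow hL hK0 p)
  refine (lintegral_lintegral_le_of_le_comp_sub
    ((measurable_truncatedKernel s p δ).const_mul _) hU h_integrand fun x hx y hy => ?_).trans_eq ?_
  · rw [hconst x hx y hy, edist_self, ENNReal.zero_rpow_of_pos hp, ENNReal.zero_div]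
  · rw [lintegral_const_mul _ (measurable_truncatedKernel s p δ), lintegral_truncatedKernel μ hδ,
      ← mul_assoc (ENNReal.ofReal _), ← ENNReal.ofReal_mul (by positivity)]

variable [Nontrivial E]

theorem lintegral_truncatedKernel_one_lt_top {s p : ℝ} (hs0 : 0 < s) (hs1 : s < 1) (hp : 0 < p) :
    ∫⁻ z, truncatedKernel s p 1 z ∂μ < ∞ := by
  have h_radial : IntegrableOn (fun r : ℝ => min 1 r ^ p * r ^ (-1 - s * p)) (Ioi 0) :=
    integrableOn_min_one_rpow_mul_rpow (by linarith [mul_pos hs0 hp])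
      (by linarith [mul_pos (sub_pos.2 hs1) hp])
  refine Integrable.lintegral_lt_top ((integrable_fun_norm_addHaar μ
    (f := fun r => min 1 (r / 1) ^ p / r ^ (Module.finrank ℝ E + s * p))).2
      (h_radial.congr_fun (fun r hr => ?_) measurableSet_Ioi))
  have h_exponent : -1 - s * p =
      ((Module.finrank ℝ E - 1 : ℕ) : ℝ) - (Module.finrank ℝ E + s * p) := by
    rw [Nat.cast_sub Module.finrank_pos]
    ring
  simp only [div_one, smul_eq_mul]
  rw [h_exponent, Real.rpow_sub hr, Real.rpow_natCast]
  ring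

theorem measure_annulus {r R : ℝ} (hr : 0 ≤ r) (hrR : r < R) :
    μ (annulus r R) =
      ENNReal.ofReal (R ^ Module.finrank ℝ E - r ^ Module.finrank ℝ E) * μ (Metric.ball 0 1) := by
  rw [annulus_eq_ball_sdiff_closedBall, measure_sdiff (Metric.closedBall_subset_ball hrR)
    measurableSet_closedBall.nullMeasurableSet measure_closedBall_lt_top.ne,
    Measure.addHaar_ball _ _ (hr.trans hrR.le), Measure.addHaar_closedBall _ _ hr,
    ← ENNReal.sub_mul (fun _ _ => measure_ball_lt_top.ne), ← ENNReal.ofReal_sub _ (by positivity)]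

theorem measure_annulus_le {r R : ℝ} (hr : 0 ≤ r) (hrR : r < R) :
    μ (annulus r R) ≤
      ENNReal.ofReal ((R - r) * Module.finrank ℝ E * R ^ (Module.finrank ℝ E - 1)) *
        μ (Metric.ball 0 1) := by
  rw [measure_annulus μ hr hrR]
  gcongr
  have h := (le_abs_self _).trans (abs_pow_sub_pow_le R r (Module.finrank ℝ E))
  rwa [abs_of_pos (sub_pos.2 hrR), abs_of_nonneg hr, abs_of_pos (hr.trans_lt hrR),
    max_eq_left hrR.le] at h

theorem annular_transition_uniform_bound_general {s p : ℝ} (hs0 : 0 < s) (hs1 : s < 1)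
    (hp : 0 < p) :
    ∃ C : ℝ, 0 < C ∧
      ∀ (X : Type*) [PseudoMetricSpace X] (δ : ℝ), 0 < δ → δ ≤ 1 →
      ∀ (u : E → X) (L K : ℝ), 0 ≤ L →
        (∀ x y, dist (u x) (u y) ≤ L / δ * dist x y) →
        (∀ x ∉ annulus ((1 - δ) / 2) (1 / 2), ∀ y ∉ annulus ((1 - δ) / 2) (1 / 2), u x = u y) →
        (∀ x y, dist (u x) (u y) ≤ K) →
        gagliardoEnergy μ s p u ≤ ENNReal.ofReal (C * δ ^ (1 - s * p) * (L ^ p + K ^ p)) := by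
  set d : ℕ := Module.finrank ℝ E
  set V : ℝ := μ.real (Metric.ball 0 1)
  set I : ℝ := (∫⁻ z, truncatedKernel s p 1 z ∂μ).toReal
  have hI : ENNReal.ofReal I = ∫⁻ z, truncatedKernel s p 1 z ∂μ :=
    ENNReal.ofReal_toReal (lintegral_truncatedKernel_one_lt_top μ hs0 hs1 hp).ne
  have hV : ENNReal.ofReal V = μ (Metric.ball 0 1) := ofReal_measureReal measure_ball_lt_top.ne
  refine ⟨d * (1 / 2) ^ (d - 1) * V * I + 1, by positivity,
    fun X _ δ hδ hδ1 u L K hL hLip hconst hK => ?_⟩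
  have hK0 : 0 ≤ K := dist_nonneg.trans (hK 0 0)
  calc gagliardoEnergy μ s p u
      ≤ 2 * μ (annulus ((1 - δ) / 2) (1 / 2)) *
          (ENNReal.ofReal ((L ^ p + K ^ p) * δ ^ (-(s * p))) * ENNReal.ofReal I) :=
        hI ▸ gagliardoEnergy_le_of_eqOn_compl μ hp hδ hL (measurableSet_annulus _ _) hLip hconst hK
    _ ≤ 2 * (ENNReal.ofReal ((1 / 2 - (1 - δ) / 2) * d * (1 / 2) ^ (d - 1)) * ENNReal.ofReal V) *
          (ENNReal.ofReal ((L ^ p + K ^ p) * δ ^ (-(s * p))) * ENNReal.ofReal I) := by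
        rw [hV]
        gcongr
        exact measure_annulus_le μ (by linarith) (by linarith)
    _ = ENNReal.ofReal (d * (1 / 2) ^ (d - 1) * V * I * δ ^ (1 - s * p) * (L ^ p + K ^ p)) := by
        rw [show 1 / 2 - (1 - δ) / 2 = δ / 2 by ring, ← ENNReal.ofReal_ofNat 2,
          ← ENNReal.ofReal_mul (by positivity), ← ENNReal.ofReal_mul (by positivity),
          ← ENNReal.ofReal_mul (by positivity), ← ENNReal.ofReal_mul (by positivity),
          sub_eq_add_neg, Real.rpow_add hδ, Real.rpow_one]
        ring_nf
    _ ≤ _ := by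
        gcongr
        exact le_add_of_nonneg_right zero_le_one

end FiniteDimensionalSpace

/-- **Uniform `W^{s,p}` bound for the annular transition maps, `sp = 1`.** Let `m ≥ 2`,
`0 < s < 1`, `p = 1/s`. There is a constant `C = C(m,p)` such that for every metric space
`X`, every `δ ∈ (0,1)`, and every map `u : ℝ^m → X` which is `(L/δ)`-Lipschitz, constant
outside `U_δ = {x : (1-δ)/2 < |x| < 1/2}`, and has image of diameter at most `K`, one has
`∫∫ d(u(x),u(y))^p/|x-y|^{m+1} dx dy ≤ C (L^p + K^p)`; the bound is independent of `δ`. -/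
theorem annular_transition_uniform_bound (s p : ℝ) (m : ℕ) (hm : 2 ≤ m)
    (hs0 : 0 < s) (hs1 : s < 1) (hp : p = 1 / s) :
    ∃ C : ℝ, 0 < C ∧
      ∀ (X : Type*) [MetricSpace X] (δ : ℝ), 0 < δ → δ < 1 →
      ∀ (u : EuclideanSpace ℝ (Fin m) → X) (L K : ℝ), 0 ≤ L →
        (∀ x y : EuclideanSpace ℝ (Fin m), dist (u x) (u y) ≤ L / δ * dist x y) →
        (∀ x y : EuclideanSpace ℝ (Fin m),
          ¬((1 - δ) / 2 < ‖x‖ ∧ ‖x‖ < 1 / 2) → ¬((1 - δ) / 2 < ‖y‖ ∧ ‖y‖ < 1 / 2) →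
            u x = u y) →
        (∀ x y : EuclideanSpace ℝ (Fin m), dist (u x) (u y) ≤ K) →
        (∫⁻ x : EuclideanSpace ℝ (Fin m), ∫⁻ y : EuclideanSpace ℝ (Fin m),
            edist (u x) (u y) ^ p / edist x y ^ ((m : ℝ) + 1)) ≤
          ENNReal.ofReal (C * (L ^ p + K ^ p)) := by
  have hp0 : 0 < p := hp ▸ one_div_pos.2 hs0
  have hsp : s * p = 1 := by rw [hp, mul_one_div_cancel hs0.ne']
  have : Nontrivial (EuclideanSpace ℝ (Fin m)) :=
    Module.nontrivial_of_finrank_pos (R := ℝ) (by rw [finrank_euclideanSpace_fin]; lia)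
  obtain ⟨C, hC, h⟩ := annular_transition_uniform_bound_general
    (volume : Measure (EuclideanSpace ℝ (Fin m))) hs0 hs1 hp0
  refine ⟨C, hC, fun X _ δ hδ hδ1 u L K hL hLip hconst hK => ?_⟩
  simpa only [gagliardoEnergy, hsp, finrank_euclideanSpace_fin, sub_self, Real.rpow_zero, mul_one]
    using h X δ hδ hδ1.le u L K hL hLip (fun x hx y hy => hconst x y hx hy) hK
end
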